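/- Let A be a symmetric 6×6 real matrix and fix η ∈ ℝ⁶. Then δ^{−3} · ∫_{{x ∈ ℝ⁶ : ‖x‖ < 1}} ⟨Ax, x⟩ · U_{δ,√δ·η}(x)² dx tends to 96π³·⟨Aη,η⟩ as δ → 0⁺. -/

import Mathlib

/-!
The substitution `x = √δ η + δ y` and the homogeneity of the quadratic form turn the left-hand
side into `576 ∫ Q(η + √δ y) (1 + ‖y‖²)⁻⁴ dy` over the set `‖√δ η + δ y‖ < 1`, and the integrand
tends pointwise to `Q(η) (1 + ‖y‖²)⁻⁴`, whose integral is `Q(η) π³ / 6`.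

Dominated convergence is slightly delicate because `‖y‖² (1 + ‖y‖²)⁻⁴` is not integrable on `ℝ⁶`.
The truncation `√δ ‖η + √δ y‖ < 1` provides the missing decay: it gives
`‖η + √δ y‖² ≤ 4 ‖η‖² + 2 ‖y‖` (`norm_sq_le_of_truncated`), so the integrands are dominated by a
multiple of the integrable function `(1 + ‖y‖²)^(-7/2)`.
-/

open MeasureTheory Filter
open scoped BigOperators

/-- The standard bubble in dimension 6. -/
noncomputable def bubble (δ : ℝ) (ξ x : EuclideanSpace ℝ (Fin 6)) : ℝ :=
  24 * δ ^ 2 / (δ ^ 2 + ‖x - ξ‖ ^ 2) ^ 2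

/-- The quadratic form ⟨Ax, x⟩ associated with a 6×6 real matrix. -/
def quadForm (A : Matrix (Fin 6) (Fin 6) ℝ) (x : EuclideanSpace ℝ (Fin 6)) : ℝ :=
  ∑ i : Fin 6, ∑ j : Fin 6, A i j * x j * x i

lemma quadForm_smul (A : Matrix (Fin 6) (Fin 6) ℝ) (c : ℝ) (x : EuclideanSpace ℝ (Fin 6)) :
    quadForm A (c • x) = c ^ 2 * quadForm A x := by
  simp only [quadForm, PiLp.smul_apply, smul_eq_mul, Finset.mul_sum]
  refine Finset.sum_congr rfl fun i _ => Finset.sum_congr rfl fun j _ => ?_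
  ring

lemma continuous_quadForm (A : Matrix (Fin 6) (Fin 6) ℝ) : Continuous (quadForm A) := by
  unfold quadForm
  fun_prop

lemma abs_quadForm_le (A : Matrix (Fin 6) (Fin 6) ℝ) (x : EuclideanSpace ℝ (Fin 6)) :
    |quadForm A x| ≤ (∑ i, ∑ j, |A i j|) * ‖x‖ ^ 2 := by
  unfold quadForm
  rw [Finset.sum_mul]
  refine (Finset.abs_sum_le_sum_abs _ _).trans (Finset.sum_le_sum fun i _ => ?_)
  rw [Finset.sum_mul]
  refine (Finset.abs_sum_le_sum_abs _ _).trans (Finset.sum_le_sum fun j _ => ?_)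
  have hi : |x i| ≤ ‖x‖ := PiLp.norm_apply_le x i
  have hj : |x j| ≤ ‖x‖ := PiLp.norm_apply_le x j
  rw [abs_mul, abs_mul, mul_assoc, sq]
  gcongr

/-- The function `r ↦ r⁶ / (6 (1 + r²)³)` is a primitive of the radial integrand
`r⁵ / (1 + r²)⁴`. -/
lemma integral_radial :
    ∫ r in Set.Ioi (0 : ℝ), r ^ 5 * ((1 + r ^ 2) ^ 4)⁻¹ = 1 / 6 := by
  have hd : ∀ r ∈ Set.Ici (0 : ℝ), HasDerivAt (fun r : ℝ => r ^ 6 / (6 * (1 + r ^ 2) ^ 3))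
      (r ^ 5 * ((1 + r ^ 2) ^ 4)⁻¹) r := by
    intro r _
    have h0 : (1 + r ^ 2) ≠ 0 := by positivity
    have h := (hasDerivAt_pow 6 r).div
      ((((hasDerivAt_pow 2 r).const_add 1).pow 3).const_mul 6) (by simpa using h0)
    refine h.congr_deriv ?_
    simp only [Pi.pow_apply]
    field_simp
    norm_num
    ring
  have hlim : Tendsto (fun r : ℝ => r ^ 6 / (6 * (1 + r ^ 2) ^ 3)) atTop (nhds (1 / 6)) := by
    have h1 : Tendsto (fun r : ℝ => ((r ^ 2)⁻¹)) atTop (nhds 0) :=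
      tendsto_inv_atTop_zero.comp (tendsto_pow_atTop two_ne_zero)
    have h2 : Tendsto (fun r : ℝ => 1 / (6 * ((r ^ 2)⁻¹ + 1) ^ 3)) atTop
        (nhds (1 / (6 * (0 + 1) ^ 3))) :=
      tendsto_const_nhds.div (((h1.add_const 1).pow 3).const_mul 6) (by norm_num)
    norm_num at h2
    norm_num
    refine h2.congr' ?_
    filter_upwards [eventually_gt_atTop 0] with r hr
    field_simp
  have := integral_Ioi_of_hasDerivAt_of_nonneg' hd
    (fun r (hr : 0 < r) => by positivity) hlim
  simpa using this

lemma integral_one_add_norm_sq :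
    ∫ y : EuclideanSpace ℝ (Fin 6), ((1 + ‖y‖ ^ 2) ^ 4)⁻¹ = Real.pi ^ 3 / 6 := by
  rw [integral_fun_norm_addHaar volume (fun r : ℝ => ((1 + r ^ 2) ^ 4)⁻¹)]
  have hG : Real.Gamma (6 / 2 + 1) = 6 := by
    have := Real.Gamma_nat_eq_factorial 3
    norm_num [Nat.factorial] at this ⊢
  have hs : Real.sqrt Real.pi ^ 6 = Real.pi ^ 3 := by
    rw [show 6 = 2 * 3 from rfl, pow_mul, Real.sq_sqrt Real.pi_pos.le]
  have hv : (volume (Metric.ball (0 : EuclideanSpace ℝ (Fin 6)) 1)).toReal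
      = Real.pi ^ 3 / 6 := by
    rw [EuclideanSpace.volume_ball]
    simp only [Fintype.card_fin, ENNReal.ofReal_one, one_pow, one_mul, Nat.cast_ofNat, hG, hs]
    exact ENNReal.toReal_ofReal (by positivity)
  simp only [Measure.real, hv, finrank_euclideanSpace_fin, smul_eq_mul, nsmul_eq_mul,
    Nat.add_one_sub_one, integral_radial]
  push_cast
  ring

/-- If `‖η‖ ≤ s‖y‖`, then `‖η + s y‖ ≤ 2s‖y‖` and the truncation yields `‖η + s y‖² ≤ 2‖y‖`;
otherwise `‖η + s y‖ ≤ 2‖η‖`. -/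
lemma norm_sq_le_of_truncated {s : ℝ} (hs : 0 < s) (η y : EuclideanSpace ℝ (Fin 6))
    (h : s * ‖η + s • y‖ < 1) : ‖η + s • y‖ ^ 2 ≤ 4 * ‖η‖ ^ 2 + 2 * ‖y‖ := by
  have h1 : ‖η + s • y‖ ≤ ‖η‖ + s * ‖y‖ := by
    simpa [norm_smul, abs_of_pos hs] using norm_add_le η (s • y)
  have hz := norm_nonneg (η + s • y)
  have hy := norm_nonneg y
  have hη := norm_nonneg η
  rcases le_total ‖η‖ (s * ‖y‖) with h2 | h2
  · nlinarith [mul_le_mul_of_nonneg_right h.le hy]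
  · nlinarith

/-- The rescaling `x = s η + s² y` with `s = √δ`. -/
lemma rescaled_integral (A : Matrix (Fin 6) (Fin 6) ℝ) (η : EuclideanSpace ℝ (Fin 6))
    {s : ℝ} (hs : 0 < s) :
    (s ^ 2) ^ (-3 : ℤ) * ∫ x in {x : EuclideanSpace ℝ (Fin 6) | ‖x‖ < 1},
        quadForm A x * (bubble (s ^ 2) (s • η) x) ^ 2 =
      576 * ∫ y : EuclideanSpace ℝ (Fin 6), {y | s * ‖η + s • y‖ < 1}.indicator
        (fun y => quadForm A (η + s • y) * ((1 + ‖y‖ ^ 2) ^ 4)⁻¹) y := by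
  have hm : MeasurableSet {x : EuclideanSpace ℝ (Fin 6) | ‖x‖ < 1} :=
    measurableSet_lt measurable_norm measurable_const
  rw [← integral_indicator hm]
  set f : EuclideanSpace ℝ (Fin 6) → ℝ := {x : EuclideanSpace ℝ (Fin 6) | ‖x‖ < 1}.indicator
    fun x => quadForm A x * (bubble (s ^ 2) (s • η) x) ^ 2 with hf
  have hsub : ∫ x, f x = s ^ 12 * ∫ y, f (s • η + s ^ 2 • y) := by
    rw [Measure.integral_comp_smul volume (fun x => f (s • η + x)) (s ^ 2),
      integral_add_left_eq_self, finrank_euclideanSpace_fin, smul_eq_mul,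
      abs_of_pos (by positivity)]
    field_simp
  rw [hsub, ← mul_assoc, ← integral_const_mul, ← integral_const_mul]
  congr 1 with y
  have hx : s • η + s ^ 2 • y = s • (η + s • y) := by
    rw [smul_add, smul_smul, sq]
  have hmem : (s • η + s ^ 2 • y ∈ {x : EuclideanSpace ℝ (Fin 6) | ‖x‖ < 1}) ↔
      y ∈ {y | s * ‖η + s • y‖ < 1} := by
    simp only [Set.mem_ofPred_eq, hx, norm_smul, Real.norm_eq_abs, abs_of_pos hs]
  by_cases hy : y ∈ {y | s * ‖η + s • y‖ < 1}
  · rw [hf, Set.indicator_of_mem (hmem.2 hy), Set.indicator_of_mem hy, bubble,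
      add_sub_cancel_left, hx, quadForm_smul, norm_smul, Real.norm_eq_abs,
      abs_of_pos (by positivity)]
    have h0 : (1 + ‖y‖ ^ 2) ≠ 0 := by positivity
    rw [show (s ^ 2) ^ 2 + (s ^ 2 * ‖y‖) ^ 2 = s ^ 4 * (1 + ‖y‖ ^ 2) by ring, zpow_neg,
      show (s ^ 2) ^ (3 : ℤ) = s ^ 6 by norm_cast; ring]
    field_simp
    norm_num
  · rw [hf, Set.indicator_of_notMem (fun h => hy (hmem.1 h)), Set.indicator_of_notMem hy]
    simp

lemma tendsto_rescaled (A : Matrix (Fin 6) (Fin 6) ℝ) (η : EuclideanSpace ℝ (Fin 6)) :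
    Tendsto (fun s : ℝ => ∫ y : EuclideanSpace ℝ (Fin 6), {y | s * ‖η + s • y‖ < 1}.indicator
        (fun y => quadForm A (η + s • y) * ((1 + ‖y‖ ^ 2) ^ 4)⁻¹) y)
      (nhdsWithin 0 (Set.Ioi 0))
      (nhds (∫ y : EuclideanSpace ℝ (Fin 6), quadForm A η * ((1 + ‖y‖ ^ 2) ^ 4)⁻¹)) := by
  set C := ∑ i, ∑ j, |A i j| with hC
  have hC0 : 0 ≤ C := by positivity
  have hQ := continuous_quadForm A
  refine tendsto_integral_filter_of_dominated_convergence
    (fun y => C * (4 * ‖η‖ ^ 2 + 2) * (1 + ‖y‖ ^ 2) ^ (-(7 : ℝ) / 2)) ?_ ?_ ?_ ?_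
  · refine Eventually.of_forall fun s => ?_
    have hms : MeasurableSet {y : EuclideanSpace ℝ (Fin 6) | s * ‖η + s • y‖ < 1} :=
      measurableSet_lt (by fun_prop) measurable_const
    refine (Measurable.indicator ?_ hms).aestronglyMeasurable
    exact (hQ.measurable.comp (by fun_prop)).mul (by fun_prop)
  · filter_upwards [self_mem_nhdsWithin] with s hs
    refine Eventually.of_forall fun y => ?_
    by_cases hy : y ∈ {y | s * ‖η + s • y‖ < 1}
    · rw [Set.indicator_of_mem hy, norm_mul, Real.norm_eq_abs, norm_inv, norm_pow,
        Real.norm_of_nonneg (by positivity : (0 : ℝ) ≤ 1 + ‖y‖ ^ 2)]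
      have hp : (0 : ℝ) < 1 + ‖y‖ ^ 2 := by positivity
      have hr1 : (1 : ℝ) ≤ Real.sqrt (1 + ‖y‖ ^ 2) :=
        Real.one_le_sqrt.2 (by nlinarith [sq_nonneg ‖y‖])
      have hr2 : ‖y‖ ≤ Real.sqrt (1 + ‖y‖ ^ 2) := Real.le_sqrt_of_sq_le (by linarith)
      have hpow : (1 + ‖y‖ ^ 2) ^ (-(7 : ℝ) / 2)
          = Real.sqrt (1 + ‖y‖ ^ 2) * ((1 + ‖y‖ ^ 2) ^ 4)⁻¹ := by
        rw [Real.sqrt_eq_rpow, ← Real.rpow_natCast (1 + ‖y‖ ^ 2) 4, ← Real.rpow_neg hp.le, ← Real.rpow_add hp]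
        norm_num
      rw [hpow, ← mul_assoc]
      gcongr
      calc |quadForm A (η + s • y)| ≤ C * ‖η + s • y‖ ^ 2 := abs_quadForm_le A _
        _ ≤ C * (4 * ‖η‖ ^ 2 + 2 * ‖y‖) := by
          gcongr
          exact norm_sq_le_of_truncated hs η y hy
        _ ≤ C * ((4 * ‖η‖ ^ 2 + 2) * Real.sqrt (1 + ‖y‖ ^ 2)) := by
          gcongr
          nlinarith [sq_nonneg ‖η‖]
        _ = _ := by ring
    · rw [Set.indicator_of_notMem hy, norm_zero]
      positivity
  · exact (integrable_rpow_neg_one_add_norm_sq (by simp; norm_num)).const_mul _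
  · refine Eventually.of_forall fun y => ?_
    have hc : Continuous fun s : ℝ => s * ‖η + s • y‖ := by fun_prop
    have h1 : ∀ᶠ s in nhds (0 : ℝ), s * ‖η + s • y‖ < 1 :=
      hc.continuousAt.eventually_lt continuousAt_const (by simp)
    have h2 : Tendsto (fun s : ℝ => quadForm A (η + s • y) * ((1 + ‖y‖ ^ 2) ^ 4)⁻¹) (nhds 0)
        (nhds (quadForm A η * ((1 + ‖y‖ ^ 2) ^ 4)⁻¹)) := by
      have hc2 : Continuous
          fun s : ℝ => quadForm A (η + s • y) * ((1 + ‖y‖ ^ 2) ^ 4)⁻¹ :=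
        (hQ.comp (by fun_prop)).mul continuous_const
      simpa using hc2.tendsto 0
    refine (h2.congr' ?_).mono_left nhdsWithin_le_nhds
    filter_upwards [h1] with s hs
    rw [Set.indicator_of_mem (by exact hs)]

theorem quadform_against_bubble_sq_asymptotics
    (A : Matrix (Fin 6) (Fin 6) ℝ) (hA : A.IsSymm) (η : EuclideanSpace ℝ (Fin 6)) :
    Tendsto
      (fun δ : ℝ =>
        δ ^ (-3 : ℤ) *
          ∫ x in {x : EuclideanSpace ℝ (Fin 6) | ‖x‖ < 1},
            quadForm A x * (bubble δ (Real.sqrt δ • η) x) ^ 2)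
      (nhdsWithin 0 (Set.Ioi 0)) (nhds (96 * Real.pi ^ 3 * quadForm A η)) := by
  have hsqrt : Tendsto Real.sqrt (nhdsWithin 0 (Set.Ioi 0)) (nhdsWithin 0 (Set.Ioi 0)) := by
    refine tendsto_nhdsWithin_iff.2 ⟨?_, ?_⟩
    · simpa using (Real.continuous_sqrt.tendsto 0).mono_left
        (nhdsWithin_le_nhds (s := Set.Ioi (0 : ℝ)))
    · filter_upwards [self_mem_nhdsWithin] with δ hδ
      exact Real.sqrt_pos.2 hδ
  have h := ((tendsto_rescaled A η).comp hsqrt).const_mul 576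
  rw [integral_const_mul, integral_one_add_norm_sq,
    show 576 * (quadForm A η * (Real.pi ^ 3 / 6)) = 96 * Real.pi ^ 3 * quadForm A η by ring] at h
  refine h.congr' ?_
  filter_upwards [self_mem_nhdsWithin] with δ hδ
  have hr := rescaled_integral A η (Real.sqrt_pos.2 hδ)
  rw [Real.sq_sqrt (le_of_lt hδ)] at hr
  exact hr.symm
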